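/- arXiv:1911.01841 — 2 statements merged into one kernel-verified Lean document; each statement's English description precedes it below -/
import Mathlib

section
/- Let l ≥ 1 players each have strategy space ℝⁿ (EuclideanSpace ℝ (Fin n)). For each player i ∈ Fin l, let A i ⊆ ℝⁿ be a nonempty, convex, compact set of admissible strategies, let fᵢ : (Fin l → ℝⁿ) → ℝ be continuous, and let qᵢ : ℝⁿ → ℝ be convex and continuous. Assume that for every admissible strategy profile x ∈ ∏ᵢ A i and every player i, the function xᵢ ↦ fᵢ(x with its i-th component replaced by xᵢ) is convex on A i. Then there exists a Nash equilibrium, i.e. a profile x̄ with x̄ i ∈ A i for every i such that for every i and every xᵢ ∈ A i one has fᵢ(x̄) + qᵢ(x̄ i) ≤ fᵢ(x̄ with i-th component replaced by xᵢ) + qᵢ(xᵢ). -/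
/-!
A profile `x` is a Nash equilibrium as soon as the Nikaido–Isoda function
`Φ(x, y) = ∑ᵢ (cᵢ(x) - cᵢ(x with i-th component yᵢ))` satisfies `Φ(x, y) ≤ 0` for all admissible
`y`. Since `Φ` is continuous in `x`, concave in `y` and zero on the diagonal, such an `x` exists
by Ky Fan's inequality.

By compactness, Ky Fan's inequality reduces to finitely many `y₁, …, yₘ`. On the simplex of their
weights `t`, Brouwer's theorem applied to `t ↦ (t + Φ⁺) / (1 + ∑ Φ⁺)`, where
`Φ⁺ᵢ = max (Φ(∑ tⱼ yⱼ, yᵢ)) 0`, gives a point where `Φ⁺` is proportional to `t`. Unless `Φ⁺ = 0`,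
this makes `Φ` positive at each `yᵢ` with `tᵢ ≠ 0`, hence by concavity on the diagonal.

Brouwer's theorem for the cube follows from the Poincaré–Miranda theorem, whose approximate form on
a fine grid is Kuhn's cubical version of Sperner's lemma. There the simplices of Kuhn's
triangulation carrying all colours are counted modulo 2 through their facets carrying all colours
but the last. Such facets in the interior of a cell cancel in pairs, as do those shared by
neighbouring cells; the boundary conditions leave only the face on which the last coordinate
vanishes, where induction applies.
-/

open Finset

section RainbowFacets

variable {α β : Type*} [DecidableEq β] {s : Finset α} {t : Finset β} {g : α → β}

theorem injOn_of_subset_image_of_card_le (hst : t ⊆ s.image g) (hcard : #s ≤ #t) :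
    Set.InjOn g s :=
  card_image_iff.1 (card_image_le.antisymm (hcard.trans (card_le_card hst)))

variable [DecidableEq α]

theorem injOn_erase_of_subset_image_erase {k : α} (hcard : #s = #t + 1) (hk : k ∈ s)
    (hdoor : t ⊆ (s.erase k).image g) : Set.InjOn g (s.erase k) :=
  injOn_of_subset_image_of_card_le hdoor (by rw [card_erase_of_mem hk]; omega)

theorem card_filter_subset_image_erase_of_insert_subset {c : β} (hct : c ∉ t)
    (hcard : #s = #t + 1) (hfull : insert c t ⊆ s.image g) :
    #{k ∈ s | t ⊆ (s.erase k).image g} = 1 := by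
  have hinj : Set.InjOn g s :=
    injOn_of_subset_image_of_card_le hfull (by rw [card_insert_of_notMem hct, hcard])
  have himage : s.image g = insert c t :=
    (eq_of_subset_of_card_le hfull (card_image_le.trans
      (by rw [card_insert_of_notMem hct, hcard]))).symm
  obtain ⟨a, ha, rfl⟩ := mem_image.1 (hfull (mem_insert_self c t))
  refine card_eq_one.2 ⟨a, ext fun k => ?_⟩
  rw [mem_filter, mem_singleton]
  constructor
  · rintro ⟨hk, hdoor⟩
    by_contra hka
    have hgk : g k ∈ t := mem_of_mem_insert_of_ne (himage ▸ mem_image_of_mem g hk)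
      fun h => hka (hinj hk ha h)
    obtain ⟨j, hj, hjk⟩ := mem_image.1 (hdoor hgk)
    exact ne_of_mem_erase hj (hinj (mem_of_mem_erase hj) hk hjk)
  · rintro rfl
    refine ⟨ha, fun d hd => ?_⟩
    obtain ⟨j, hj, rfl⟩ := mem_image.1 (hfull (mem_insert_of_mem hd))
    exact mem_image_of_mem g (mem_erase.2 ⟨by rintro rfl; exact hct hd, hj⟩)

theorem card_filter_subset_image_erase_of_mapsTo (hcard : #s = #t + 1) (hmaps : Set.MapsTo g s t)
    (hsub : t ⊆ s.image g) : #{k ∈ s | t ⊆ (s.erase k).image g} = 2 := by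
  obtain ⟨a, ha, b, hb, hab, hgab⟩ :=
    exists_ne_map_eq_of_card_lt_of_maps_to (by omega : #t < #s) hmaps
  have erase_door : ∀ {x y}, y ∈ s → x ≠ y → g x = g y → t ⊆ (s.erase x).image g := by
    intro x y hy hxy hgxy d hd
    obtain ⟨j, hj, rfl⟩ := mem_image.1 (hsub hd)
    obtain rfl | hjx := eq_or_ne j x
    · exact mem_image.2 ⟨y, mem_erase.2 ⟨hxy.symm, hy⟩, hgxy.symm⟩
    · exact mem_image_of_mem g (mem_erase.2 ⟨hjx, hj⟩)
  refine card_eq_two.2 ⟨a, b, hab, ext fun k => ?_⟩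
  rw [mem_filter, mem_insert, mem_singleton]
  constructor
  · rintro ⟨hk, hdoor⟩
    by_contra! hkab
    exact hab (injOn_erase_of_subset_image_erase hcard hk hdoor
      (mem_erase.2 ⟨hkab.1.symm, ha⟩) (mem_erase.2 ⟨hkab.2.symm, hb⟩) hgab)
  · rintro (rfl | rfl)
    · exact ⟨ha, erase_door hb hab hgab⟩
    · exact ⟨hb, erase_door ha hab.symm hgab.symm⟩

theorem sum_indicator_subset_image_erase {c : β} (hct : c ∉ t) (hcard : #s = #t + 1)
    (hmaps : Set.MapsTo g s (insert c t)) :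
    ∑ k ∈ s, (if t ⊆ (s.erase k).image g then (1 : ZMod 2) else 0) =
      if insert c t ⊆ s.image g then 1 else 0 := by
  rw [sum_boole]
  split_ifs with hfull
  · rw [card_filter_subset_image_erase_of_insert_subset hct hcard hfull, Nat.cast_one]
  · by_cases hsub : t ⊆ s.image g
    · have hmaps' : Set.MapsTo g s t := fun k hk => (hmaps hk).resolve_left fun hkc =>
        hfull (insert_subset (hkc ▸ mem_image_of_mem g hk) hsub)
      rw [card_filter_subset_image_erase_of_mapsTo hcard hmaps' hsub]
      rfl
    · rw [filter_false_of_mem fun k _ hdoor =>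
        hsub (hdoor.trans (image_subset_image (erase_subset k s))), card_empty, Nat.cast_zero]

end RainbowFacets

theorem sum_piFinset_range_eq_sum_filter_add_sum_shift {ι M : Type*} [Fintype ι] [DecidableEq ι]
    [AddCommMonoid M] (N : ℕ) (F : (ι → ℕ) → M) (i : ι) (hF : ∀ v, v i = N → F v = 0) :
    ∑ v ∈ Fintype.piFinset (fun _ => range N), F v =
      ∑ v ∈ Fintype.piFinset (fun _ => range N) with v i = 0, F v +
        ∑ v ∈ Fintype.piFinset (fun _ => range N), F (v + Pi.single i 1) := by
  rw [← sum_filter_add_sum_filter_not _ (fun v : ι → ℕ => v i = 0)]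
  congr 1
  symm
  refine sum_bij_ne_zero (fun v _ _ => v + Pi.single i 1) (fun v hv hne => ?_)
    (fun _ _ _ _ _ _ h => add_right_cancel h) (fun w hw hne => ?_) (fun _ _ _ => rfl)
  · have hvN : v i + 1 ≠ N := fun h => hne (hF _ (by simpa using h))
    simp only [Fintype.mem_piFinset, mem_range, mem_filter, Pi.add_apply] at hv ⊢
    refine ⟨fun j => ?_, by simp⟩
    have hvj := hv j
    obtain rfl | hji := eq_or_ne j i
    · rw [Pi.single_eq_same]
      omega
    · rwa [Pi.single_eq_of_ne hji, add_zero]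
  · simp only [Fintype.mem_piFinset, mem_range, mem_filter] at hw
    have hcancel : w - Pi.single i 1 + Pi.single i 1 = w :=
      tsub_add_cancel_of_le (update_le_iff.2
        ⟨Nat.one_le_iff_ne_zero.2 hw.2, fun j _ => Nat.zero_le (w j)⟩)
    refine ⟨w - Pi.single i 1, ?_, by rwa [hcancel], hcancel⟩
    simpa using fun j => (Nat.sub_le _ _).trans_lt (hw.1 j)

section KuhnTriangulation

open Equiv (Perm)

variable {n : ℕ}

/-- The `k`-th vertex of the simplex of Kuhn's triangulation of `ℝⁿ` attached to the lattice
point `v` and the permutation `σ`: starting from `v`, the coordinates are raised by one in the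
order in which `σ` enumerates them. The simplex itself has the vertices with `k ≤ n`. -/
def kuhnVertex (v : Fin n → ℕ) (σ : Perm (Fin n)) (k : ℕ) : Fin n → ℕ :=
  fun i => v i + if (σ i : ℕ) < k then 1 else 0

theorem kuhnVertex_mem_Icc (v : Fin n → ℕ) (σ : Perm (Fin n)) (k : ℕ) :
    kuhnVertex v σ k ∈ Set.Icc v (v + 1) := by
  constructor <;> intro i <;> simp only [kuhnVertex, Pi.add_apply, Pi.one_apply] <;>
    split_ifs <;> omega

theorem kuhnVertex_apply_symm_last (v : Fin (n + 1) → ℕ) (σ : Perm (Fin (n + 1))) {k : ℕ}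
    (hk : k ≤ n) : kuhnVertex v σ k (σ.symm (Fin.last n)) = v (σ.symm (Fin.last n)) := by
  simp [kuhnVertex, hk]

theorem kuhnVertex_swap_mul (v : Fin (n + 1) → ℕ) (σ : Perm (Fin (n + 1))) (j : Fin n) {k : ℕ}
    (hk : k ≠ j + 1) :
    kuhnVertex v (Equiv.swap j.castSucc j.succ * σ) k = kuhnVertex v σ k := by
  funext i
  simp only [kuhnVertex, Equiv.Perm.mul_apply, Equiv.swap_apply_def]
  congr 1
  split_ifs <;> simp_all [Fin.ext_iff] <;> omega

-- Raising first the coordinate that `σ` raises last leads into the neighbouring cell, so the facet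
-- without its first vertex is the facet without its last vertex of a simplex of that cell.
theorem kuhnVertex_finRotate_mul (v : Fin (n + 1) → ℕ) (σ : Perm (Fin (n + 1))) {k : ℕ}
    (hk : k ≤ n) :
    kuhnVertex v (finRotate (n + 1) * σ) (k + 1) =
      kuhnVertex (v + Pi.single (σ.symm (Fin.last n)) 1) σ k := by
  funext i
  obtain ⟨j, rfl⟩ := σ.symm.surjective i
  simp only [kuhnVertex, Equiv.Perm.mul_apply, Equiv.apply_symm_apply, Pi.add_apply,
    Pi.single_apply, EmbeddingLike.apply_eq_iff_eq]
  obtain rfl | hj := eq_or_ne j (Fin.last n)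
  · simp [hk]
  · simp only [hj, coe_finRotate_of_ne_last hj, Nat.add_lt_add_iff_right, if_false, add_zero]

/-- The permutation of `Fin (n + 1)` that fixes the last element and acts as `σ` on the others. -/
def permFixLast (σ : Perm (Fin n)) : Perm (Fin (n + 1)) :=
  finSuccEquivLast.symm.permCongr σ.optionCongr

theorem permFixLast_castSucc (σ : Perm (Fin n)) (i : Fin n) :
    permFixLast σ i.castSucc = (σ i).castSucc := by
  simp [permFixLast]

theorem permFixLast_last (σ : Perm (Fin n)) : permFixLast σ (Fin.last n) = Fin.last n := by
  simp [permFixLast]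

theorem permFixLast_injective : Function.Injective (permFixLast (n := n)) :=
  finSuccEquivLast.symm.permCongr.injective.comp Equiv.optionCongr_injective

theorem exists_permFixLast_eq {σ : Perm (Fin (n + 1))} (hσ : σ (Fin.last n) = Fin.last n) :
    ∃ τ, permFixLast τ = σ := by
  let ρ : Perm (Option (Fin n)) := finSuccEquivLast.permCongr σ
  have hρ : ρ none = none := by simp [ρ, hσ]
  have hdecomp : (Equiv.removeNone ρ).optionCongr = ρ := by
    have h := Equiv.Perm.decomposeOption.symm_apply_apply ρ
    rwa [Equiv.Perm.decomposeOption_symm_apply, Equiv.Perm.decomposeOption_apply, hρ,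
      Equiv.swap_self, ← Equiv.Perm.one_def, one_mul] at h
  refine ⟨Equiv.removeNone ρ, ?_⟩
  rw [permFixLast, hdecomp]
  exact finSuccEquivLast.permCongr.symm_apply_apply σ

theorem kuhnVertex_snoc_permFixLast (w : Fin n → ℕ) (τ : Perm (Fin n)) {k : ℕ} (hk : k ≤ n) :
    kuhnVertex (Fin.snoc w 0 : Fin (n + 1) → ℕ) (permFixLast τ) k =
      (Fin.snoc (kuhnVertex w τ k) 0 : Fin (n + 1) → ℕ) := by
  funext i
  cases i using Fin.lastCases with
  | last => simp [kuhnVertex, permFixLast_last, hk]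
  | cast i => simp [kuhnVertex, permFixLast_castSucc]

/-- The colours `0, …, m - 1` all occur among the first `m` vertices of a Kuhn simplex. For
`m = n + 1` this concerns the whole simplex, for `m = n` the facet opposite to its last vertex. -/
abbrev IsRainbow (l : (Fin n → ℕ) → ℕ) (v : Fin n → ℕ) (σ : Perm (Fin n)) (m : ℕ) : Prop :=
  range m ⊆ (range m).image fun k => l (kuhnVertex v σ k)

/-- The boundary conditions of Kuhn's cubical analogue of Sperner's lemma, for colourings of the
lattice points of the cube `[0, N]ⁿ` with the colours `0, …, n`. -/
structure IsKuhnColoring (N : ℕ) (l : (Fin n → ℕ) → ℕ) : Prop where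
  le_dim : ∀ x, l x ≤ n
  le_of_eq_zero : ∀ (x : Fin n → ℕ) (i : Fin n), x i = 0 → l x ≤ i
  ne_of_eq_top : ∀ (x : Fin n → ℕ) (i : Fin n), x i = N → l x ≠ i

variable {N : ℕ}

theorem sum_perm_indicator_subset_image_eq_zero (l : (Fin (n + 1) → ℕ) → ℕ)
    (v : Fin (n + 1) → ℕ) (j : Fin n) {s t : Finset ℕ} (hj : (j : ℕ) + 1 ∉ s) :
    ∑ σ : Perm (Fin (n + 1)),
      (if t ⊆ s.image fun k => l (kuhnVertex v σ k) then (1 : ZMod 2) else 0) = 0 := by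
  have himage : ∀ σ, (s.image fun k => l (kuhnVertex v (Equiv.swap j.castSucc j.succ * σ) k)) =
      s.image fun k => l (kuhnVertex v σ k) := fun σ => image_congr fun k hk => by
    rw [kuhnVertex_swap_mul v σ j (ne_of_mem_of_not_mem hk hj)]
  refine sum_involution (fun σ _ => Equiv.swap j.castSucc j.succ * σ) (fun σ _ => ?_)
    (fun σ _ _ hfix => ?_) (fun σ _ => mem_univ _) (fun σ _ => by simp)
  · rw [himage, CharTwo.add_self_eq_zero]
  · exact Fin.castSucc_lt_succ.ne (Equiv.swap_eq_one_iff.1 (mul_eq_right.1 hfix))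

theorem subset_image_erase_zero_finRotate_iff (l : (Fin (n + 1) → ℕ) → ℕ) (v : Fin (n + 1) → ℕ)
    (σ : Perm (Fin (n + 1))) :
    (range (n + 1) ⊆ ((range (n + 2)).erase 0).image
      fun k => l (kuhnVertex v (finRotate (n + 1) * σ) k)) ↔
      IsRainbow l (v + Pi.single (σ.symm (Fin.last n)) 1) σ (n + 1) := by
  have herase : (range (n + 2)).erase 0 = (range (n + 1)).image Nat.succ := by
    ext k
    cases k <;> simp
  rw [IsRainbow, herase, image_image]
  refine iff_of_eq (congrArg _ (image_congr fun k hk => ?_))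
  exact congrArg l (kuhnVertex_finRotate_mul v σ (Nat.lt_succ_iff.1 (mem_range.1 hk)))

theorem sum_perm_isRainbow (l : (Fin (n + 1) → ℕ) → ℕ) (hl : ∀ x, l x ≤ n + 1)
    (v : Fin (n + 1) → ℕ) :
    ∑ σ : Perm (Fin (n + 1)), (if IsRainbow l v σ (n + 2) then (1 : ZMod 2) else 0) =
      ∑ σ : Perm (Fin (n + 1)), ((if IsRainbow l v σ (n + 1) then 1 else 0) +
        if IsRainbow l (v + Pi.single (σ.symm (Fin.last n)) 1) σ (n + 1) then 1 else 0) := by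
  let door (σ : Perm (Fin (n + 1))) (k : ℕ) : ZMod 2 :=
    if range (n + 1) ⊆ ((range (n + 2)).erase k).image fun k => l (kuhnVertex v σ k) then 1 else 0
  have sum_doors : ∀ σ, ∑ k ∈ range (n + 2), door σ k =
      if IsRainbow l v σ (n + 2) then 1 else 0 := fun σ => by
    simp only [IsRainbow, door, range_add_one (n := n + 1)]
    refine sum_indicator_subset_image_erase notMem_range_self (by simp) fun k _ => ?_
    have := hl (kuhnVertex v σ k)
    simp only [coe_range, Set.mem_insert_iff, Set.mem_Iio]
    omega
  have inner_doors : ∀ k ∈ range n, ∑ σ, door σ (k + 1) = 0 := fun k hk =>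
    sum_perm_indicator_subset_image_eq_zero l v ⟨k, mem_range.1 hk⟩ (notMem_erase _ _)
  have first_door : ∑ σ, door σ 0 = ∑ σ : Perm (Fin (n + 1)),
      if IsRainbow l (v + Pi.single (σ.symm (Fin.last n)) 1) σ (n + 1) then 1 else 0 := by
    rw [← Equiv.sum_comp (Equiv.mulLeft (finRotate (n + 1)))]
    exact sum_congr rfl fun σ _ =>
      if_congr (subset_image_erase_zero_finRotate_iff l v σ) rfl rfl
  have last_door : ∀ σ, door σ (n + 1) = if IsRainbow l v σ (n + 1) then 1 else 0 := fun σ => by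
    simp only [door, range_add_one (n := n + 1), erase_insert notMem_range_self]
  simp_rw [← sum_doors]
  rw [sum_comm, sum_range_succ, sum_range_succ', sum_eq_zero inner_doors, first_door, zero_add,
    sum_congr rfl fun σ _ => last_door σ, add_comm, sum_add_distrib]

namespace IsKuhnColoring

variable {l : (Fin (n + 1) → ℕ) → ℕ} {v : Fin (n + 1) → ℕ} {σ : Perm (Fin (n + 1))}

theorem snoc_zero (hl : IsKuhnColoring N l) :
    IsKuhnColoring N fun w : Fin n → ℕ => l (Fin.snoc w 0) where
  le_dim w := by simpa using hl.le_of_eq_zero (Fin.snoc w 0) (Fin.last n) (by simp)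
  le_of_eq_zero w i hi := by
    simpa using hl.le_of_eq_zero (Fin.snoc w 0) i.castSucc (by simpa using hi)
  ne_of_eq_top w i hi := by
    simpa using hl.ne_of_eq_top (Fin.snoc w 0) i.castSucc (by simpa using hi)

theorem not_isRainbow_of_eq_top (hl : IsKuhnColoring N l) (hv : v (σ.symm (Fin.last n)) = N) :
    ¬ IsRainbow l v σ (n + 1) := fun hrainbow => by
  obtain ⟨k, hk, hcolor⟩ := mem_image.1 (hrainbow (mem_range.2 (σ.symm (Fin.last n)).isLt))
  exact hl.ne_of_eq_top _ _
    ((kuhnVertex_apply_symm_last v σ (Nat.lt_succ_iff.1 (mem_range.1 hk))).trans hv) hcolor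

theorem not_isRainbow_of_eq_zero (hl : IsKuhnColoring N l) (hv : v (σ.symm (Fin.last n)) = 0)
    (hσ : σ (Fin.last n) ≠ Fin.last n) : ¬ IsRainbow l v σ (n + 1) := fun hrainbow => by
  obtain ⟨k, hk, hcolor⟩ := mem_image.1 (hrainbow (self_mem_range_succ n))
  have hle := hl.le_of_eq_zero _ _
    ((kuhnVertex_apply_symm_last v σ (Nat.lt_succ_iff.1 (mem_range.1 hk))).trans hv)
  rw [hcolor] at hle
  have hlast : σ.symm (Fin.last n) = Fin.last n := Fin.last_le_iff.1 hle
  exact hσ (σ.symm_apply_eq.1 hlast).symm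

theorem sum_bottom_face (hl : IsKuhnColoring N l) (hN : 0 < N) :
    ∑ σ : Perm (Fin (n + 1)), ∑ v ∈ Fintype.piFinset (fun _ => range N) with
      v (σ.symm (Fin.last n)) = 0, (if IsRainbow l v σ (n + 1) then (1 : ZMod 2) else 0) =
    ∑ τ : Perm (Fin n), ∑ w ∈ Fintype.piFinset (fun _ => range N),
      if IsRainbow (fun w => l (Fin.snoc w 0)) w τ (n + 1) then 1 else 0 := by
  symm
  refine Fintype.sum_of_injective permFixLast permFixLast_injective _ _ (fun σ hσ => ?_)
    fun τ => ?_
  · refine sum_eq_zero fun v hv => if_neg (hl.not_isRainbow_of_eq_zero (mem_filter.1 hv).2 ?_)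
    exact fun hfix => hσ (exists_permFixLast_eq hfix)
  · have hlast : (permFixLast τ).symm (Fin.last n) = Fin.last n :=
      (Equiv.symm_apply_eq _).2 (permFixLast_last τ).symm
    refine sum_bij' (fun w _ => Fin.snoc w 0) (fun v _ => Fin.init v) (fun w hw => ?_)
      (fun v hv => ?_) (fun w _ => Fin.init_snoc _ _) (fun v hv => ?_) fun w _ => ?_
    · simp only [mem_filter, Fintype.mem_piFinset, mem_range, hlast, Fin.snoc_last,
        and_true] at hw ⊢
      intro i
      cases i using Fin.lastCases with
      | last => simpa using hN
      | cast i => simpa using hw i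
    · simp only [mem_filter, Fintype.mem_piFinset] at hv ⊢
      exact fun i => hv.1 i.castSucc
    · have hv0 : v (Fin.last n) = 0 := by simpa only [hlast] using (mem_filter.1 hv).2
      rw [← hv0]
      exact Fin.snoc_init_self v
    · refine if_congr (iff_of_eq (congrArg _ (image_congr fun k hk => ?_))) rfl rfl
      exact congrArg l
        (kuhnVertex_snoc_permFixLast w τ (Nat.lt_succ_iff.1 (mem_range.1 hk))).symm

end IsKuhnColoring

theorem IsKuhnColoring.sum_isRainbow_eq_one (hN : 0 < N) {l : (Fin n → ℕ) → ℕ}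
    (hl : IsKuhnColoring N l) :
    ∑ v ∈ Fintype.piFinset (fun _ => range N), ∑ σ : Perm (Fin n),
      (if IsRainbow l v σ (n + 1) then (1 : ZMod 2) else 0) = 1 := by
  induction n with
  | zero => simp [IsRainbow, Nat.le_zero.1 (hl.le_dim _)]
  | succ n ih =>
    have telescope : ∀ σ : Perm (Fin (n + 1)), ∑ v ∈ Fintype.piFinset (fun _ => range N),
        ((if IsRainbow l v σ (n + 1) then (1 : ZMod 2) else 0) +
          if IsRainbow l (v + Pi.single (σ.symm (Fin.last n)) 1) σ (n + 1) then 1 else 0) =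
        ∑ v ∈ Fintype.piFinset (fun _ => range N) with v (σ.symm (Fin.last n)) = 0,
          if IsRainbow l v σ (n + 1) then 1 else 0 := fun σ => by
      rw [sum_add_distrib, sum_piFinset_range_eq_sum_filter_add_sum_shift N _ (σ.symm (Fin.last n))
        fun v hv => if_neg (hl.not_isRainbow_of_eq_top hv), add_assoc, CharTwo.add_self_eq_zero,
        add_zero]
    rw [sum_congr rfl fun v _ => sum_perm_isRainbow l hl.le_dim v, sum_comm,
      sum_congr rfl fun σ _ => telescope σ, hl.sum_bottom_face hN, sum_comm, ih hl.snoc_zero]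

theorem IsKuhnColoring.exists_isRainbow (hN : 0 < N) {l : (Fin n → ℕ) → ℕ}
    (hl : IsKuhnColoring N l) : ∃ v σ, (∀ i, v i < N) ∧ IsRainbow l v σ (n + 1) := by
  obtain ⟨v, hv, hsum⟩ :=
    exists_ne_zero_of_sum_ne_zero (by rw [hl.sum_isRainbow_eq_one hN]; exact one_ne_zero)
  obtain ⟨σ, -, hσ⟩ := exists_ne_zero_of_sum_ne_zero hsum
  exact ⟨v, σ, by simpa using hv, (ite_ne_right_iff.1 hσ).1⟩

/-- The least index at which `p` holds, or `n` if there is none. -/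
noncomputable def firstIndex (p : Fin n → Prop) : ℕ :=
  sInf {c | ∀ i : Fin n, (i : ℕ) = c → p i}

theorem firstIndex_le_dim (p : Fin n → Prop) : firstIndex p ≤ n :=
  Nat.sInf_le fun i hi => absurd hi i.isLt.ne

theorem firstIndex_le {p : Fin n → Prop} {i : Fin n} (hi : p i) : firstIndex p ≤ i :=
  Nat.sInf_le fun _ hj => Fin.ext hj ▸ hi

theorem of_firstIndex_eq {p : Fin n → Prop} {i : Fin n} (hi : firstIndex p = i) : p i :=
  Nat.sInf_mem (s := {c | ∀ i : Fin n, (i : ℕ) = c → p i})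
    ⟨n, fun j hj => absurd hj j.isLt.ne⟩ i hi.symm

theorem isKuhnColoring_firstIndex {P : (Fin n → ℕ) → Fin n → Prop}
    (h0 : ∀ x i, x i = 0 → P x i) (hN : ∀ x i, x i = N → ¬ P x i) :
    IsKuhnColoring N fun x => firstIndex (P x) where
  le_dim x := firstIndex_le_dim (P x)
  le_of_eq_zero x i hi := firstIndex_le (h0 x i hi)
  ne_of_eq_top x i hi heq := hN x i hi (of_firstIndex_eq heq)

theorem exists_cell_forall_exists_and_exists_not_fin (hNpos : 0 < N)
    {P : (Fin n → ℕ) → Fin n → Prop} (h0 : ∀ x i, x i = 0 → P x i)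
    (hN : ∀ x i, x i = N → ¬ P x i) :
    ∃ v : Fin n → ℕ, (∀ i, v i < N) ∧ ∀ i,
      (∃ y ∈ Set.Icc v (v + 1), P y i) ∧ ∃ z ∈ Set.Icc v (v + 1), ¬ P z i := by
  obtain ⟨v, σ, hv, hrainbow⟩ := (isKuhnColoring_firstIndex h0 hN).exists_isRainbow hNpos
  have exists_color : ∀ c ≤ n, ∃ y ∈ Set.Icc v (v + 1), firstIndex (P y) = c := fun c hc => by
    obtain ⟨k, -, hk⟩ := mem_image.1 (hrainbow (mem_range.2 (Nat.lt_succ_iff.2 hc)))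
    exact ⟨_, kuhnVertex_mem_Icc v σ k, hk⟩
  refine ⟨v, hv, fun i => ⟨?_, ?_⟩⟩
  · obtain ⟨y, hy, hcolor⟩ := exists_color i i.isLt.le
    exact ⟨y, hy, of_firstIndex_eq hcolor⟩
  · obtain ⟨z, hz, hcolor⟩ := exists_color n le_rfl
    exact ⟨z, hz, fun hP => (firstIndex_le hP).not_gt (i.isLt.trans_eq hcolor.symm)⟩

theorem exists_cell_forall_exists_and_exists_not {ι : Type*} [Finite ι] (hNpos : 0 < N)
    {P : (ι → ℕ) → ι → Prop} (h0 : ∀ x i, x i = 0 → P x i) (hN : ∀ x i, x i = N → ¬ P x i) :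
    ∃ v : ι → ℕ, (∀ i, v i < N) ∧ ∀ i,
      (∃ y ∈ Set.Icc v (v + 1), P y i) ∧ ∃ z ∈ Set.Icc v (v + 1), ¬ P z i := by
  let e := Finite.equivFin ι
  obtain ⟨v, hv, hcell⟩ := exists_cell_forall_exists_and_exists_not_fin hNpos
    (P := fun x i => P (x ∘ e) (e.symm i)) (fun x i hi => h0 _ _ (by simpa using hi))
    (fun x i hi => hN _ _ (by simpa using hi))
  refine ⟨v ∘ e, fun i => hv (e i), fun i => ?_⟩
  have hmem : ∀ {y}, y ∈ Set.Icc v (v + 1) → y ∘ e ∈ Set.Icc (v ∘ e) (v ∘ e + 1) :=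
    fun hy => ⟨fun j => hy.1 (e j), fun j => hy.2 (e j)⟩
  obtain ⟨⟨y, hy, hPy⟩, z, hz, hPz⟩ := hcell (e i)
  rw [e.symm_apply_apply] at hPy hPz
  exact ⟨⟨y ∘ e, hmem hy, hPy⟩, z ∘ e, hmem hz, hPz⟩

end KuhnTriangulation

section FixedPoints

variable {ι : Type*}

/-- The point of the unit cube that corresponds to a lattice point of `[0, N]^ι`. -/
noncomputable def gridPoint (N : ℕ) (x : ι → ℕ) : ι → ℝ := fun i => x i / N

theorem gridPoint_mem_Icc {N : ℕ} {x : ι → ℕ} (hx : ∀ i, x i ≤ N) :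
    gridPoint N x ∈ Set.Icc (0 : ι → ℝ) 1 :=
  ⟨fun _ => by simp only [gridPoint, Pi.zero_apply]; positivity,
    fun i => div_le_one_of_le₀ (Nat.cast_le.2 (hx i)) N.cast_nonneg⟩

theorem dist_gridPoint_le [Fintype ι] {N : ℕ} {v y : ι → ℕ} (hy : y ∈ Set.Icc v (v + 1)) :
    dist (gridPoint N y) (gridPoint N v) ≤ 1 / N := by
  refine (dist_pi_le_iff (by positivity)).2 fun i => ?_
  have hlower : (v i : ℝ) ≤ y i := mod_cast hy.1 i
  have hupper : (y i : ℝ) ≤ v i + 1 := mod_cast hy.2 i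
  rw [Real.dist_eq, gridPoint, gridPoint, ← sub_div, abs_of_nonneg (by positivity [hlower])]
  gcongr
  linarith

theorem exists_gridPoint_signs [Fintype ι] {F : (ι → ℝ) → ι → ℝ}
    (h0 : ∀ x ∈ Set.Icc (0 : ι → ℝ) 1, ∀ i, x i = 0 → F x i ≤ 0)
    (h1 : ∀ x ∈ Set.Icc (0 : ι → ℝ) 1, ∀ i, x i = 1 → 0 ≤ F x i) {N : ℕ} (hN : 0 < N) :
    ∃ p ∈ Set.Icc (0 : ι → ℝ) 1, ∀ i,
      (∃ y ∈ Set.Icc 0 1 ∩ Metric.closedBall p (1 / N), F y i ≤ 0) ∧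
      ∃ z ∈ Set.Icc 0 1 ∩ Metric.closedBall p (1 / N), 0 ≤ F z i := by
  obtain ⟨v, hv, hcell⟩ := exists_cell_forall_exists_and_exists_not hN
    (P := fun x i => x i = 0 ∨ x i ≠ N ∧ F (gridPoint N x) i ≤ 0) (fun x i hi => Or.inl hi)
    (fun x i hi hP => by omega)
  have hcube : ∀ {y}, y ∈ Set.Icc v (v + 1) → gridPoint N y ∈ Set.Icc (0 : ι → ℝ) 1 :=
    fun hy => gridPoint_mem_Icc fun i => (hy.2 i).trans (hv i)
  refine ⟨gridPoint N v, gridPoint_mem_Icc fun i => (hv i).le, fun i => ?_⟩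
  obtain ⟨⟨y, hy, hPy⟩, z, hz, hPz⟩ := hcell i
  refine ⟨⟨gridPoint N y, ⟨hcube hy, dist_gridPoint_le hy⟩, ?_⟩,
    gridPoint N z, ⟨hcube hz, dist_gridPoint_le hz⟩, ?_⟩
  · rcases hPy with hy0 | ⟨-, hFy⟩
    · exact h0 _ (hcube hy) i (by simp [gridPoint, hy0])
    · exact hFy
  · obtain hzN | hzN := eq_or_ne (z i) N
    · exact h1 _ (hcube hz) i (by simp [gridPoint, hzN, hN.ne'])
    · exact le_of_not_ge fun hFz => hPz (Or.inr ⟨hzN, hFz⟩)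

theorem norm_le_of_coordwise_signs_near [Fintype ι] {α : Type*} {F : α → ι → ℝ} {s : Set α}
    {p : α} {ε : ℝ} (hε : 0 ≤ ε) (hosc : ∀ y ∈ s, dist (F y) (F p) ≤ ε)
    (hle : ∀ i, ∃ y ∈ s, F y i ≤ 0) (hge : ∀ i, ∃ z ∈ s, 0 ≤ F z i) : ‖F p‖ ≤ ε := by
  refine (pi_norm_le_iff_of_nonneg hε).2 fun i => ?_
  have hcoord : ∀ y ∈ s, |F y i - F p i| ≤ ε := fun y hy =>
    (dist_le_pi_dist (F y) (F p) i).trans (hosc y hy)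
  obtain ⟨y, hy, hFy⟩ := hle i
  obtain ⟨z, hz, hFz⟩ := hge i
  have hy' := abs_le.1 (hcoord y hy)
  have hz' := abs_le.1 (hcoord z hz)
  exact abs_le.2 ⟨by linarith, by linarith⟩

theorem poincare_miranda [Finite ι] {F : (ι → ℝ) → ι → ℝ} (hF : ContinuousOn F (Set.Icc 0 1))
    (h0 : ∀ x ∈ Set.Icc (0 : ι → ℝ) 1, ∀ i, x i = 0 → F x i ≤ 0)
    (h1 : ∀ x ∈ Set.Icc (0 : ι → ℝ) 1, ∀ i, x i = 1 → 0 ≤ F x i) :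
    ∃ x ∈ Set.Icc (0 : ι → ℝ) 1, F x = 0 := by
  have := Fintype.ofFinite ι
  have almost_zero : ∀ ε > 0, ∃ p ∈ Set.Icc (0 : ι → ℝ) 1, ‖F p‖ ≤ ε := fun ε hε => by
    obtain ⟨δ, hδ, hunif⟩ := Metric.uniformContinuousOn_iff.1
      (isCompact_Icc.uniformContinuousOn_of_continuous hF) ε hε
    obtain ⟨N, hN⟩ := exists_nat_one_div_lt hδ
    obtain ⟨p, hp, hsigns⟩ := exists_gridPoint_signs h0 h1 N.succ_pos
    refine ⟨p, hp, norm_le_of_coordwise_signs_near hε.le (fun y hy => ?_)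
      (fun i => (hsigns i).1) (fun i => (hsigns i).2)⟩
    exact (hunif y hy.1 p hp ((Metric.mem_closedBall.1 hy.2).trans_lt (mod_cast hN))).le
  obtain ⟨x, hx, hmin⟩ := isCompact_Icc.exists_isMinOn
    (Set.nonempty_Icc.2 (zero_le_one' (ι → ℝ))) hF.norm
  refine ⟨x, hx, norm_le_zero_iff.1 (le_of_forall_pos_le_add fun ε hε => ?_)⟩
  obtain ⟨p, hp, hFp⟩ := almost_zero ε hε
  exact (hmin hp).trans (by rwa [zero_add])

theorem exists_fixedPoint_Icc [Finite ι] {g : (ι → ℝ) → ι → ℝ}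
    (hg : ContinuousOn g (Set.Icc 0 1)) (hmaps : Set.MapsTo g (Set.Icc 0 1) (Set.Icc 0 1)) :
    ∃ x ∈ Set.Icc (0 : ι → ℝ) 1, g x = x := by
  obtain ⟨x, hx, hzero⟩ := poincare_miranda (F := fun x => x - g x) (continuousOn_id.sub hg)
    (fun x hx i hi => by simpa [hi] using (hmaps hx).1 i)
    (fun x hx i hi => by simpa [hi] using (hmaps hx).2 i)
  exact ⟨x, hx, (sub_eq_zero.1 hzero).symm⟩

variable [Fintype ι]

/-- A retraction of the nonnegative orthant onto the standard simplex: the deficit of the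
coordinate sum below `1` is spread evenly over the coordinates, an excess is scaled away. -/
noncomputable def simplexRetraction (x : ι → ℝ) : ι → ℝ :=
  fun i => (x i + (max 1 (∑ j, x j) - ∑ j, x j) / Fintype.card ι) / max 1 (∑ j, x j)

theorem continuous_simplexRetraction : Continuous (simplexRetraction (ι := ι)) :=
  continuous_pi fun _ => Continuous.div (by fun_prop) (by fun_prop) fun _ =>
    (zero_lt_one.trans_le (le_max_left _ _)).ne'

theorem simplexRetraction_mem [Nonempty ι] {x : ι → ℝ} (hx : 0 ≤ x) :
    simplexRetraction x ∈ stdSimplex ℝ ι := by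
  have hpos : 0 < max 1 (∑ j, x j) := zero_lt_one.trans_le (le_max_left _ _)
  refine ⟨fun i => ?_, ?_⟩
  · have hdeficit : 0 ≤ max 1 (∑ j, x j) - ∑ j, x j := sub_nonneg.2 (le_max_right _ _)
    have hxi : 0 ≤ x i := hx i
    rw [simplexRetraction]
    positivity
  · simp only [simplexRetraction]
    rw [← sum_div, sum_add_distrib, sum_const, card_univ, nsmul_eq_mul,
      mul_div_cancel₀ _ (Nat.cast_ne_zero.2 Fintype.card_ne_zero), add_sub_cancel,
      div_self hpos.ne']

theorem simplexRetraction_of_mem {x : ι → ℝ} (hx : x ∈ stdSimplex ℝ ι) :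
    simplexRetraction x = x := by
  funext i
  simp [simplexRetraction, hx.2]

theorem exists_fixedPoint_stdSimplex [Nonempty ι] {g : (ι → ℝ) → ι → ℝ}
    (hg : ContinuousOn g (stdSimplex ℝ ι))
    (hmaps : Set.MapsTo g (stdSimplex ℝ ι) (stdSimplex ℝ ι)) :
    ∃ x ∈ stdSimplex ℝ ι, g x = x := by
  have hretract : Set.MapsTo simplexRetraction (Set.Icc (0 : ι → ℝ) 1) (stdSimplex ℝ ι) :=
    fun x hx => simplexRetraction_mem hx.1
  obtain ⟨x, hx, hfix⟩ := exists_fixedPoint_Icc (g := g ∘ simplexRetraction)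
    (hg.comp continuous_simplexRetraction.continuousOn hretract)
    ((hmaps.comp hretract).mono_right (stdSimplex_subset_Icc ℝ))
  have hxs : x ∈ stdSimplex ℝ ι := hfix ▸ hmaps (hretract hx)
  exact ⟨x, hxs, by simpa only [Function.comp_apply, simplexRetraction_of_mem hxs] using hfix⟩

theorem exists_mem_stdSimplex_eq_sum_mul [Nonempty ι] {p : (ι → ℝ) → ι → ℝ}
    (hp : ContinuousOn p (stdSimplex ℝ ι)) (hp0 : ∀ t ∈ stdSimplex ℝ ι, 0 ≤ p t) :
    ∃ t ∈ stdSimplex ℝ ι, ∀ i, p t i = (∑ j, p t j) * t i := by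
  have hpos : ∀ t ∈ stdSimplex ℝ ι, 0 < 1 + ∑ j, p t j := fun t ht =>
    add_pos_of_pos_of_nonneg one_pos (sum_nonneg fun j _ => hp0 t ht j)
  obtain ⟨t, ht, hfix⟩ := exists_fixedPoint_stdSimplex
    (g := fun t i => (t i + p t i) / (1 + ∑ j, p t j))
    (continuousOn_pi.2 fun i => ContinuousOn.div (by fun_prop) (by fun_prop)
      fun t ht => (hpos t ht).ne')
    (fun t ht => ⟨fun i => div_nonneg (add_nonneg (ht.1 i) (hp0 t ht i)) (hpos t ht).le, by
      rw [← sum_div, sum_add_distrib, ht.2, div_self (hpos t ht).ne']⟩)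
  refine ⟨t, ht, fun i => ?_⟩
  have hi := (div_eq_iff (hpos t ht).ne').1 (congrFun hfix i)
  linarith

theorem exists_mem_stdSimplex_nonpos_or_pos_on_support [Nonempty ι] {h : (ι → ℝ) → ι → ℝ}
    (hh : ContinuousOn h (stdSimplex ℝ ι)) :
    ∃ t ∈ stdSimplex ℝ ι, (∀ i, h t i ≤ 0) ∨ ∀ i, t i ≠ 0 → 0 < h t i := by
  obtain ⟨t, ht, hprop⟩ := exists_mem_stdSimplex_eq_sum_mul (p := fun t i => max (h t i) 0)
    (by fun_prop) (fun t _ i => le_max_right _ _)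
  have hsum : 0 ≤ ∑ j, max (h t j) 0 := sum_nonneg fun j _ => le_max_right _ _
  refine ⟨t, ht, hsum.eq_or_lt.imp (fun hzero i => ?_) fun hpos i hi => ?_⟩
  · exact max_eq_right_iff.1 (by rw [hprop i, ← hzero, zero_mul])
  · have hmax : 0 < max (h t i) 0 := hprop i ▸ mul_pos hpos ((ht.1 i).lt_of_ne' hi)
    simpa using hmax

end FixedPoints

section KyFan

variable {E : Type*} [AddCommGroup E] [Module ℝ E] [TopologicalSpace E] [ContinuousAdd E]
  [ContinuousSMul ℝ E] {K : Set E} {φ : E → E → ℝ}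

theorem ky_fan_inequality_finite {ι : Type*} [Finite ι] [Nonempty ι] (hK : Convex ℝ K)
    (hcont : ∀ y ∈ K, ContinuousOn (fun x => φ x y) K)
    (hquasi : ∀ x ∈ K, QuasiconcaveOn ℝ K (φ x)) (hdiag : ∀ x ∈ K, φ x x ≤ 0)
    {y : ι → E} (hy : ∀ i, y i ∈ K) : ∃ x ∈ K, ∀ i, φ x (y i) ≤ 0 := by
  have := Fintype.ofFinite ι
  let point (t : ι → ℝ) : E := ∑ i, t i • y i
  have hpoint : Set.MapsTo point (stdSimplex ℝ ι) K := fun t ht =>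
    hK.sum_mem (fun i _ => ht.1 i) ht.2 fun i _ => hy i
  have hpoint_cont : Continuous point := by fun_prop
  obtain ⟨t, ht, hsol | hpos⟩ := exists_mem_stdSimplex_nonpos_or_pos_on_support
    (h := fun t i => φ (point t) (y i))
    (continuousOn_pi.2 fun i => (hcont _ (hy i)).comp hpoint_cont.continuousOn hpoint)
  · exact ⟨point t, hpoint ht, hsol⟩
  · have hmem : ∑ᶠ i, t i • y i ∈ {z | z ∈ K ∧ 0 < φ (point t) z} :=
      ((hquasi _ (hpoint ht)).convex_gt 0).finsum_mem ht.1
        (by rw [finsum_eq_sum_of_fintype, ht.2]) fun i hi => ⟨hy i, hpos i hi⟩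
    rw [finsum_eq_sum_of_fintype] at hmem
    exact absurd hmem.2 (hdiag _ (hpoint ht)).not_gt

theorem ky_fan_inequality (hK : Convex ℝ K) (hKcomp : IsCompact K) (hKne : K.Nonempty)
    (hcont : ∀ y ∈ K, ContinuousOn (fun x => φ x y) K)
    (hquasi : ∀ x ∈ K, QuasiconcaveOn ℝ K (φ x)) (hdiag : ∀ x ∈ K, φ x x ≤ 0) :
    ∃ x ∈ K, ∀ y ∈ K, φ x y ≤ 0 := by
  have := isCompact_iff_compactSpace.1 hKcomp
  have hclosed : ∀ y : K, IsClosed {x : K | φ x y ≤ 0} := fun y =>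
    isClosed_le (hcont y y.2).domRestrict continuous_const
  have hfinite : ∀ u : Finset K, (⋂ y ∈ u, {x : K | φ x y ≤ 0}).Nonempty := fun u => by
    obtain rfl | hu := u.eq_empty_or_nonempty
    · have := hKne.to_subtype
      simp
    · have := hu.to_subtype
      obtain ⟨x, hx, hxu⟩ := ky_fan_inequality_finite hK hcont hquasi hdiag
        (y := fun y : u => (y : E)) fun y => y.1.2
      exact ⟨⟨x, hx⟩, Set.mem_iInter₂.2 fun y hy => hxu ⟨y, hy⟩⟩
  obtain ⟨x, hx⟩ := CompactSpace.iInter_nonempty hclosed hfinite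
  exact ⟨x, x.2, fun y hy => Set.mem_iInter.1 hx ⟨y, hy⟩⟩

end KyFan

section Nash

variable {ι : Type*} [DecidableEq ι] {E : ι → Type*}

/-- Nash equilibrium of the game in which player `i` chooses a strategy in `A i` and minimizes the
cost `c i`, a function of the whole strategy profile. -/
def IsNashEquilibrium (A : ∀ i, Set (E i)) (c : ι → (∀ i, E i) → ℝ) (x : ∀ i, E i) : Prop :=
  (∀ i, x i ∈ A i) ∧ ∀ i, ∀ y ∈ A i, c i x ≤ c i (Function.update x i y)

/-- The Nikaido–Isoda function of a game with costs `c`: the total gain of the players when each of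
them, separately, deviates from the profile `x` to his strategy in `y`. -/
def nikaidoIsoda [Fintype ι] (c : ι → (∀ i, E i) → ℝ) (x y : ∀ i, E i) : ℝ :=
  ∑ i, (c i x - c i (Function.update x i (y i)))

theorem update_mem_univ_pi {A : ∀ i, Set (E i)} {x : ∀ i, E i} (hx : x ∈ Set.univ.pi A) {i : ι}
    {y : E i} (hy : y ∈ A i) : Function.update x i y ∈ Set.univ.pi A :=
  Set.update_mem_pi_iff.2 ⟨fun j _ => hx j trivial, fun _ => hy⟩

variable {A : ∀ i, Set (E i)} {c : ι → (∀ i, E i) → ℝ}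

section Fintype

variable [Fintype ι]

theorem nikaidoIsoda_self (c : ι → (∀ i, E i) → ℝ) (x : ∀ i, E i) : nikaidoIsoda c x x = 0 := by
  simp [nikaidoIsoda]

theorem nikaidoIsoda_update (c : ι → (∀ i, E i) → ℝ) (x : ∀ i, E i) (i : ι) (y : E i) :
    nikaidoIsoda c x (Function.update x i y) = c i x - c i (Function.update x i y) := by
  rw [nikaidoIsoda, sum_eq_single_of_mem i (mem_univ i), Function.update_self]
  intro j _ hj
  rw [Function.update_of_ne hj, Function.update_eq_self, sub_self]

theorem isNashEquilibrium_of_nikaidoIsoda_nonpos {x : ∀ i, E i} (hx : x ∈ Set.univ.pi A)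
    (hnonpos : ∀ y ∈ Set.univ.pi A, nikaidoIsoda c x y ≤ 0) : IsNashEquilibrium A c x :=
  ⟨fun i => hx i trivial, fun i y hy => sub_nonpos.1 <|
    nikaidoIsoda_update c x i y ▸ hnonpos _ (update_mem_univ_pi hx hy)⟩

theorem continuousOn_nikaidoIsoda_left [∀ i, TopologicalSpace (E i)]
    (hc : ∀ i, ContinuousOn (c i) (Set.univ.pi A))
    {y : ∀ i, E i} (hy : y ∈ Set.univ.pi A) :
    ContinuousOn (fun x => nikaidoIsoda c x y) (Set.univ.pi A) :=
  continuousOn_finsetSum _ fun i _ => (hc i).sub <| (hc i).comp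
    (continuous_id.update i continuous_const).continuousOn
    fun _ hx => update_mem_univ_pi hx (hy i trivial)

theorem concaveOn_nikaidoIsoda_right [∀ i, AddCommGroup (E i)] [∀ i, Module ℝ (E i)] {x : ∀ i, E i}
    (hconv : ∀ i, ConvexOn ℝ (A i) fun y => c i (Function.update x i y)) :
    ConcaveOn ℝ (Set.univ.pi A) (nikaidoIsoda c x) := by
  have hA : Convex ℝ (Set.univ.pi A) := convex_pi fun i _ => (hconv i).1
  have hterm : ∀ i, ConcaveOn ℝ (Set.univ.pi A)
      fun y => c i x - c i (Function.update x i (y i)) := fun i =>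
    (concaveOn_const _ hA).sub
      (((hconv i).comp_linearMap (LinearMap.proj i)).subset (fun y hy => hy i trivial) hA)
  refine ⟨hA, fun y hy z hz a b ha hb hab => ?_⟩
  simp only [nikaidoIsoda, smul_sum, ← sum_add_distrib]
  exact sum_le_sum fun i _ => (hterm i).2 hy hz ha hb hab

end Fintype

theorem exists_nash_equilibrium_general [Finite ι] [∀ i, AddCommGroup (E i)] [∀ i, Module ℝ (E i)]
    [∀ i, TopologicalSpace (E i)] [∀ i, ContinuousAdd (E i)] [∀ i, ContinuousSMul ℝ (E i)]
    (hAne : ∀ i, (A i).Nonempty) (hAcomp : ∀ i, IsCompact (A i))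
    (hc : ∀ i, ContinuousOn (c i) (Set.univ.pi A))
    (hconv : ∀ x ∈ Set.univ.pi A, ∀ i, ConvexOn ℝ (A i) fun y => c i (Function.update x i y)) :
    ∃ x, IsNashEquilibrium A c x := by
  have := Fintype.ofFinite ι
  have hne : (Set.univ.pi A).Nonempty := Set.univ_pi_nonempty_iff.2 hAne
  have hconcave := fun x hx => concaveOn_nikaidoIsoda_right (hconv x hx)
  obtain ⟨x, hx, hnonpos⟩ := ky_fan_inequality (hconcave _ hne.some_mem).1
    (isCompact_univ_pi hAcomp) hne (fun y => continuousOn_nikaidoIsoda_left hc)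
    (fun x hx => (hconcave x hx).quasiconcaveOn) (fun x _ => (nikaidoIsoda_self c x).le)
  exact ⟨x, isNashEquilibrium_of_nikaidoIsoda_nonpos hx hnonpos⟩

end Nash

/-- Existence of Nash equilibria (Theorem 1 of the paper): with convex compact
nonempty strategy sets, continuous smooth parts `f i`, convex continuous
nonsmooth parts `q i`, and each `f i` convex in the player's own variable,
a Nash equilibrium exists. -/
theorem exists_nash_equilibrium
    (n l : ℕ) (hl : 1 ≤ l)
    (A : Fin l → Set (EuclideanSpace ℝ (Fin n)))
    (f : Fin l → (Fin l → EuclideanSpace ℝ (Fin n)) → ℝ)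
    (q : Fin l → EuclideanSpace ℝ (Fin n) → ℝ)
    (hAne : ∀ i, (A i).Nonempty)
    (hAconv : ∀ i, Convex ℝ (A i))
    (hAcomp : ∀ i, IsCompact (A i))
    (hf : ∀ i, Continuous (f i))
    (hqconv : ∀ i, ConvexOn ℝ Set.univ (q i))
    (hqcont : ∀ i, Continuous (q i))
    (hconv : ∀ x : Fin l → EuclideanSpace ℝ (Fin n), (∀ j, x j ∈ A j) →
      ∀ i, ConvexOn ℝ (A i) (fun xi => f i (Function.update x i xi))) :
    ∃ xe : Fin l → EuclideanSpace ℝ (Fin n),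
      (∀ i, xe i ∈ A i) ∧
      ∀ i, ∀ xi ∈ A i,
        f i xe + q i (xe i) ≤ f i (Function.update xe i xi) + q i xi := by
  obtain ⟨x, hxA, hx⟩ := exists_nash_equilibrium_general (c := fun i x => f i x + q i (x i))
    hAne hAcomp (fun i => ((hf i).add ((hqcont i).comp (continuous_apply i))).continuousOn)
    fun x hx i => by
      simp only [Function.update_self]
      exact (hconv x (fun j => hx j trivial) i).add
        ((hqconv i).subset (Set.subset_univ _) (hAconv i))
  exact ⟨x, hxA, by simpa using hx⟩
end

section
/- Let F : ℝᵐ × ℝˢ → ℝˢ (with ℝᵐ = EuclideanSpace ℝ (Fin m), ℝˢ = EuclideanSpace ℝ (Fin s)) be continuously differentiable, let q : ℝˢ → ℝ be convex and continuous, let A ⊆ ℝˢ be closed and convex, and define the solution map S : ℝᵐ → Set ℝˢ by S(p) := {x ∈ A : ⟨F(p,x), y − x⟩ + q(y) − q(x) ≥ 0 for all y ∈ A}. Let (p̄, x̄) be such that x̄ ∈ S(p̄), and assume that the partial Jacobian M := ∇ₓF(p̄, x̄) (a linear map ℝˢ → ℝˢ, not necessarily symmetric) is positive definite, i.e. ⟨M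 u, u⟩ > 0 for every u ≠ 0. Then S has a single-valued and Lipschitzian localization around (p̄, x̄): there exist open neighborhoods U of p̄ and V of x̄ and a Lipschitz continuous map s : U → ℝˢ with s(p̄) = x̄ such that S(p) ∩ V = {s(p)} for every p ∈ U. -/
open scoped RealInnerProductSpace

/-!
Near `(p̄, x̄)` the operators `F(p, ·)` are uniformly strongly monotone and Lipschitz, because the
partial Jacobian is coercive and `F` is strictly differentiable. On `A ∩ closedBall x̄ r` the
inequality is solved by the forward-backward iteration `x ↦ prox_{τq}(x - τ F(p, x))`, a contraction
for small `τ`. Strong monotonicity bounds the distance of two solutions by a multiple of that of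
their parameters.
Finally, `x` solves the inequality iff it minimizes the convex function `⟪F(p, x), ·⟫ + q` over `A`,
so a solution on `A ∩ closedBall x̄ r` that lies in the open ball is a solution on `A`.
-/

open Filter Set Metric
open scoped NNReal Topology

section StrongConvexity

variable {E : Type*} [NormedAddCommGroup E] [NormedSpace ℝ E] {s : Set E} {f : E → ℝ} {m c : ℝ}

lemma norm_sub_sq_le_of_strongConvexOn (hf : StrongConvexOn s m f) (hc : ∀ z ∈ s, c ≤ f z)
    {x y : E} (hx : x ∈ s) (hy : y ∈ s) :
    m / 4 * ‖x - y‖ ^ 2 ≤ (f x - c) + (f y - c) := by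
  have half_nonneg : (0 : ℝ) ≤ 1 / 2 := by norm_num
  have midpoint_le := hf.2 hx hy half_nonneg half_nonneg (add_halves 1)
  have le_midpoint := hc _ (hf.1 hx hy half_nonneg half_nonneg (add_halves 1))
  simp only [smul_eq_mul] at midpoint_le
  linarith

theorem exists_isMinOn_of_strongConvexOn (hs : IsComplete s) (hne : s.Nonempty) (hm : 0 < m)
    (hf : StrongConvexOn s m f) (hlsc : LowerSemicontinuousOn f s) (hbdd : BddBelow (f '' s)) :
    ∃ x ∈ s, IsMinOn f s x := by
  set c := sInf (f '' s)
  have hc : ∀ z ∈ s, c ≤ f z := fun z hz => csInf_le hbdd (mem_image_of_mem f hz)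
  obtain ⟨v, v_anti, v_tendsto, hv⟩ := exists_seq_tendsto_sInf (hne.image f) hbdd
  choose u hus huv using hv
  have u_cauchy : CauchySeq u := by
    refine cauchySeq_of_le_tendsto_0 (fun N => √(8 / m * (v N - c))) (fun i j N hi hj => ?_) ?_
    · refine Real.le_sqrt_of_sq_le ?_
      have near_min := norm_sub_sq_le_of_strongConvexOn hf hc (hus i) (hus j)
      rw [huv, huv] at near_min
      rw [dist_eq_norm, div_mul_eq_mul_div, le_div_iff₀ hm]
      linarith [v_anti hi, v_anti hj]
    · simpa [c] using ((v_tendsto.sub_const c).const_mul (8 / m)).sqrt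
  obtain ⟨x, hx, u_tendsto⟩ := cauchySeq_tendsto_of_isComplete hs hus u_cauchy
  have fx_le : f x ≤ c := le_of_forall_lt_imp_le_of_dense fun a ha => by
    have u_tendsto_within : Tendsto u atTop (𝓝[s] x) :=
      tendsto_nhdsWithin_iff.2 ⟨u_tendsto, .of_forall hus⟩
    refine ge_of_tendsto v_tendsto ?_
    filter_upwards [u_tendsto_within.eventually (hlsc x hx a ha)] with n hn
    exact (huv n).le.trans' hn.le
  exact ⟨x, hx, fun z hz => fx_le.trans (hc z hz)⟩

end StrongConvexity

section VariationalInequality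

variable {E : Type*} [NormedAddCommGroup E] [InnerProductSpace ℝ E]
  {G G' : E → E} {q : E → ℝ} {A : Set E} {x x' : E} {μ τ : ℝ} {K : ℝ≥0}

/-- The solution set of the variational inequality of the second kind with operator `G`, convex term
`q` and constraint set `A`. For `G = (· - z)` its only possible element is the proximal point of `z`
with respect to `q` on `A`. -/
def viSolutions (G : E → E) (q : E → ℝ) (A : Set E) : Set E :=
  {x | x ∈ A ∧ ∀ y ∈ A, 0 ≤ ⟪G x, y - x⟫ + q y - q x}

/-- Strong monotonicity with modulus `μ` of the operator `G` on the set `A`. It is the hypothesis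
under which solutions of a variational inequality are unique and stable. -/
def StronglyMonotoneOn (μ : ℝ) (G : E → E) (A : Set E) : Prop :=
  ∀ x ∈ A, ∀ y ∈ A, μ * ‖x - y‖ ^ 2 ≤ ⟪G x - G y, x - y⟫

lemma mem_viSolutions_iff_isMinOn :
    x ∈ viSolutions G q A ↔ x ∈ A ∧ IsMinOn (fun y => ⟪G x, y⟫ + q y) A x := by
  refine and_congr_right fun _ => forall₂_congr fun y _ => ?_
  rw [inner_sub_right, mem_ofPred_eq]
  constructor <;> intro h <;> linarith

lemma mem_viSolutions_of_subset {B : Set E} (hBA : B ⊆ A) (hx : x ∈ viSolutions G q A)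
    (hxB : x ∈ B) : x ∈ viSolutions G q B :=
  ⟨hxB, fun y hy => hx.2 y (hBA hy)⟩

theorem mem_viSolutions_of_inter_nhds (hq : ConvexOn ℝ A q) {N : Set E} (hN : N ∈ 𝓝 x)
    (hx : x ∈ viSolutions G q (A ∩ N)) : x ∈ viSolutions G q A := by
  rw [mem_viSolutions_iff_isMinOn] at hx ⊢
  have convex_objective : ConvexOn ℝ A fun y => ⟪G x, y⟫ + q y :=
    ((innerₛₗ ℝ (G x)).convexOn hq.1).add hq
  have local_min : IsLocalMinOn (fun y => ⟪G x, y⟫ + q y) A x := by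
    filter_upwards [inter_mem_nhdsWithin A hN] with y hy using hx.2 hy
  exact ⟨hx.1.1, .of_isLocalMinOn_of_convexOn hx.1.1 local_min convex_objective⟩

theorem mul_norm_sub_le_of_mem_viSolutions (hG : StronglyMonotoneOn μ G A)
    (hx : x ∈ viSolutions G q A) (hx' : x' ∈ viSolutions G' q A) :
    μ * ‖x - x'‖ ≤ ‖G' x' - G x'‖ := by
  rcases (norm_nonneg (x - x')).eq_or_lt with h | hpos
  · simp [← h]
  refine le_of_mul_le_mul_right ?_ hpos
  have test_x := hx.2 x' hx'.1
  have test_x' := hx'.2 x hx.1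
  rw [← neg_sub x x', inner_neg_right] at test_x
  calc μ * ‖x - x'‖ * ‖x - x'‖ = μ * ‖x - x'‖ ^ 2 := by ring
    _ ≤ ⟪G x - G x', x - x'⟫ := hG x hx.1 x' hx'.1
    _ ≤ ⟪G' x' - G x', x - x'⟫ := by
      rw [inner_sub_left, inner_sub_left]
      linarith
    _ ≤ ‖G' x' - G x'‖ * ‖x - x'‖ := real_inner_le_norm _ _

theorem mem_viSolutions_of_isMinOn_add {g : E → ℝ} (hg : HasFDerivAt g (innerSL ℝ (G x)) x)
    (hq : ConvexOn ℝ A q) (hx : x ∈ A) (hmin : IsMinOn (fun y => g y + q y) A x) :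
    x ∈ viSolutions G q A := by
  refine ⟨hx, fun y hy => ?_⟩
  let φ : ℝ → ℝ := fun t => g (AffineMap.lineMap x y t) + t * (q y - q x)
  have hφ : HasDerivAt φ (⟪G x, y - x⟫ + (q y - q x)) 0 := by
    have hline : HasDerivAt (AffineMap.lineMap x y : ℝ → E) (y - x) 0 :=
      AffineMap.hasDerivAt_lineMap
    have hg₀ : HasFDerivAt g (innerSL ℝ (G x)) (AffineMap.lineMap x y (0 : ℝ)) := by simpa using hg
    simpa using! (hg₀.comp_hasDerivAt 0 hline).add ((hasDerivAt_id (0 : ℝ)).mul_const (q y - q x))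
  have φ_min : IsMinOn φ (Icc 0 1) 0 := fun t ht => by
    have hline : AffineMap.lineMap x y t = (1 - t) • x + t • y := AffineMap.lineMap_apply_module ..
    have min_le := hmin (hq.1 hx hy (sub_nonneg.2 ht.2) ht.1 (sub_add_cancel 1 t))
    have convex_le := hq.2 hx hy (sub_nonneg.2 ht.2) ht.1 (sub_add_cancel 1 t)
    simp only [mem_ofPred_eq, smul_eq_mul, φ, hline, AffineMap.lineMap_apply_zero]
      at min_le convex_le ⊢
    linarith
  have deriv_nonneg := φ_min.localize.hasFDerivWithinAt_nonneg hφ.hasFDerivAt.hasFDerivWithinAt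
    (mem_posTangentConeAt_of_segment_subset (y := 1) (by simp [segment_eq_Icc]))
  simpa [add_sub_assoc] using deriv_nonneg

lemma hasFDerivAt_half_norm_sub_sq (z x : E) :
    HasFDerivAt (fun y => 1 / 2 * ‖y - z‖ ^ 2) (innerSL ℝ (x - z)) x := by
  refine (((hasFDerivAt_id x).sub_const z).norm_sq.const_mul (1 / 2 : ℝ)).congr_fderiv ?_
  ext
  simp

lemma strongConvexOn_half_norm_sub_sq_add (hq : ConvexOn ℝ A q) (z : E) :
    StrongConvexOn A 1 fun y => 1 / 2 * ‖y - z‖ ^ 2 + q y := by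
  have hlinear : ConvexOn ℝ A (innerₛₗ ℝ (-z)) := (innerₛₗ ℝ (-z)).convexOn hq.1
  refine strongConvexOn_iff_convex.2 (((hq.add hlinear).add_const (1 / 2 * ‖z‖ ^ 2)).congr ?_)
  intro y _
  simp only [Pi.add_apply, coe_innerₛₗ_apply, inner_neg_left, norm_sub_sq_real,
    real_inner_comm z]
  ring

lemma bddBelow_image_half_norm_sub_sq_add (hA : IsClosed A) (hq : ConvexOn ℝ A q)
    (hlsc : LowerSemicontinuousOn q A) (z : E) :
    BddBelow ((fun y => 1 / 2 * ‖y - z‖ ^ 2 + q y) '' A) := by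
  rcases A.eq_empty_or_nonempty with rfl | ⟨x, hx⟩
  · simp
  obtain ⟨l, c, l_add_c_le, -⟩ :=
    hq.exists_affine_le_of_lt (𝕜 := ℝ) hx (sub_one_lt (q x)) hA hlsc
  refine ⟨l z + c - 1 / 2 * ‖l‖ ^ 2, forall_mem_image.2 fun y hy => ?_⟩
  have minorant : l y + c ≤ q y := l_add_c_le ⟨y, hy⟩
  have l_ge : -(‖l‖ * ‖y - z‖) ≤ l y - l z := by
    rw [← map_sub]
    exact neg_le_of_abs_le (l.le_opNorm (y - z))
  linarith [two_mul_le_add_sq ‖l‖ ‖y - z‖]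

theorem viSolutions_sub_const_nonempty [CompleteSpace E] (hA : IsClosed A) (hne : A.Nonempty)
    (hq : ConvexOn ℝ A q) (hlsc : LowerSemicontinuousOn q A) (z : E) :
    (viSolutions (· - z) q A).Nonempty := by
  have objective_lsc : LowerSemicontinuousOn (fun y => 1 / 2 * ‖y - z‖ ^ 2 + q y) A :=
    (Continuous.lowerSemicontinuous (by fun_prop)).lowerSemicontinuousOn A |>.add hlsc
  obtain ⟨x, hx, hmin⟩ := exists_isMinOn_of_strongConvexOn hA.isComplete hne one_pos
    (strongConvexOn_half_norm_sub_sq_add hq z) objective_lsc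
    (bddBelow_image_half_norm_sub_sq_add hA hq hlsc z)
  exact ⟨x, mem_viSolutions_of_isMinOn_add (hasFDerivAt_half_norm_sub_sq z x) hq hx hmin⟩

lemma norm_sub_le_of_mem_viSolutions_sub_const {z z' : E} (hx : x ∈ viSolutions (· - z) q A)
    (hx' : x' ∈ viSolutions (· - z') q A) : ‖x - x'‖ ≤ ‖z - z'‖ := by
  have hmono : StronglyMonotoneOn 1 (· - z) A := fun a _ b _ => by
    simp
  simpa using mul_norm_sub_le_of_mem_viSolutions hmono hx hx'

lemma mem_viSolutions_of_mem_viSolutions_sub_step (hτ : 0 < τ)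
    (hx : x ∈ viSolutions (· - (x - τ • G x)) (fun y => τ * q y) A) : x ∈ viSolutions G q A := by
  refine ⟨hx.1, fun y hy => nonneg_of_mul_nonneg_right ?_ hτ⟩
  have test := hx.2 y hy
  simp only [sub_sub_cancel, real_inner_smul_left] at test
  linarith

lemma norm_step_sub_step_le (hmono : StronglyMonotoneOn μ G A) (hlip : LipschitzOnWith K G A)
    (hτ : 0 ≤ τ) (hτK : τ * K ^ 2 ≤ μ) (hx : x ∈ A) (hx' : x' ∈ A) :
    ‖(x - τ • G x) - (x' - τ • G x')‖ ≤ √(1 - τ * μ) * ‖x - x'‖ := by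
  have hmono' := mul_le_mul_of_nonneg_left (hmono x hx x' hx') hτ
  have hlip' : ‖G x - G x'‖ ^ 2 ≤ K ^ 2 * ‖x - x'‖ ^ 2 := by
    rw [← mul_pow]
    gcongr
    exact hlip.norm_sub_le hx hx'
  rw [← Real.sqrt_sq (norm_nonneg (x - x')), ← Real.sqrt_mul' _ (sq_nonneg _)]
  refine Real.le_sqrt_of_sq_le ?_
  calc ‖(x - τ • G x) - (x' - τ • G x')‖ ^ 2
      = ‖(x - x') - τ • (G x - G x')‖ ^ 2 := by congr 2; module
    _ = ‖x - x'‖ ^ 2 - 2 * (τ * ⟪G x - G x', x - x'⟫) + τ ^ 2 * ‖G x - G x'‖ ^ 2 := by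
      rw [norm_sub_sq_real, inner_smul_right, real_inner_comm, norm_smul,
        Real.norm_of_nonneg hτ, mul_pow]
    _ ≤ ‖x - x'‖ ^ 2 - 2 * (τ * (μ * ‖x - x'‖ ^ 2)) + τ ^ 2 * (K ^ 2 * ‖x - x'‖ ^ 2) := by
      gcongr
    _ = (1 - 2 * τ * μ + τ * (τ * K ^ 2)) * ‖x - x'‖ ^ 2 := by ring
    _ ≤ (1 - 2 * τ * μ + τ * μ) * ‖x - x'‖ ^ 2 := by gcongr
    _ = (1 - τ * μ) * ‖x - x'‖ ^ 2 := by ring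

theorem viSolutions_nonempty [CompleteSpace E] (hA : IsClosed A) (hne : A.Nonempty)
    (hq : ConvexOn ℝ A q) (hlsc : LowerSemicontinuousOn q A) (hμ : 0 < μ)
    (hmono : StronglyMonotoneOn μ G A) (hlip : LipschitzOnWith K G A) :
    (viSolutions G q A).Nonempty := by
  obtain ⟨τ, hτ, hτK⟩ : ∃ τ : ℝ, 0 < τ ∧ τ * K ^ 2 ≤ μ := by
    refine ⟨μ / (K ^ 2 + 1), by positivity, ?_⟩
    rw [div_mul_eq_mul_div, div_le_iff₀ (by positivity)]
    linarith
  have hτq_convex : ConvexOn ℝ A fun y => τ * q y := hq.smul hτ.le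
  have hτq_lsc : LowerSemicontinuousOn (fun y => τ * q y) A :=
    (continuous_const_mul τ).comp_lowerSemicontinuousOn hlsc (monotone_mul_left_of_nonneg hτ.le)
  choose prox hprox using viSolutions_sub_const_nonempty hA hne hτq_convex hτq_lsc
  let T : A → A := fun x => ⟨prox (x - τ • G x), (hprox _).1⟩
  have hT : ContractingWith (√(1 - τ * μ)).toNNReal T := by
    refine ⟨?_, LipschitzWith.of_dist_le_mul fun x y => ?_⟩
    · rw [Real.toNNReal_lt_one, Real.sqrt_lt' one_pos]
      linarith [mul_pos hτ hμ]
    · rw [Subtype.dist_eq, Subtype.dist_eq, dist_eq_norm, dist_eq_norm,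
        Real.coe_toNNReal _ (Real.sqrt_nonneg _)]
      exact (norm_sub_le_of_mem_viSolutions_sub_const (hprox _) (hprox _)).trans
        (norm_step_sub_step_le hmono hlip hτ.le hτK x.2 y.2)
  have : Nonempty A := hne.to_subtype
  have : CompleteSpace A := hA.completeSpace_coe
  obtain ⟨x, hx⟩ : ∃ x : A, prox (x - τ • G x) = x :=
    ⟨_, congrArg Subtype.val hT.fixedPoint_isFixedPt⟩
  have hx_mem := hprox (x - τ • G x)
  rw [hx] at hx_mem
  exact ⟨x, mem_viSolutions_of_mem_viSolutions_sub_step hτ hx_mem⟩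

end VariationalInequality

section Parametric

/-- The multifunction `S` has a single-valued and Lipschitzian localization around `(p₀, x₀)`. The
localizing map `sl` is total, its values off `U` being irrelevant. -/
def HasLipschitzLocalization {P X : Type*} [PseudoEMetricSpace P] [PseudoEMetricSpace X]
    (S : P → Set X) (p₀ : P) (x₀ : X) : Prop :=
  ∃ (U : Set P) (V : Set X) (sl : P → X) (L : ℝ≥0),
    IsOpen U ∧ IsOpen V ∧ p₀ ∈ U ∧ x₀ ∈ V ∧ LipschitzOnWith L sl U ∧ sl p₀ = x₀ ∧
    ∀ p ∈ U, S p ∩ V = {sl p}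

variable {P E : Type*} [NormedAddCommGroup E] [InnerProductSpace ℝ E]
  {F : P × E → E} {q : E → ℝ} {A : Set E} {p₀ : P} {x₀ : E} {μ : ℝ} {K : ℝ≥0}

theorem exists_lipschitzOnWith_viSolutions_eq_singleton [PseudoMetricSpace P] [CompleteSpace E]
    {W : Set P} (hA : IsClosed A) (hne : A.Nonempty) (hq : ConvexOn ℝ A q)
    (hlsc : LowerSemicontinuousOn q A) (hμ : 0 < μ)
    (hmono : ∀ p ∈ W, StronglyMonotoneOn μ (fun x => F (p, x)) A)
    (hlip : LipschitzOnWith K F (W ×ˢ A)) :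
    ∃ sl : P → E, LipschitzOnWith (K / μ.toNNReal) sl W ∧
      ∀ p ∈ W, viSolutions (fun x => F (p, x)) q A = {sl p} := by
  have hlip_right : ∀ p ∈ W, LipschitzOnWith K (fun x => F (p, x)) A := fun p hp => by
    simpa using! hlip.comp ((LipschitzWith.prodMk_left p).lipschitzOnWith (s := A))
      fun x hx => ⟨hp, hx⟩
  have hex : ∀ p ∈ W, (viSolutions (fun x => F (p, x)) q A).Nonempty := fun p hp =>
    viSolutions_nonempty hA hne hq hlsc hμ (hmono p hp) (hlip_right p hp)
  choose! sl hsl using hex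
  refine ⟨sl, .of_dist_le_mul fun p hp p' hp' => ?_, fun p hp => ?_⟩
  · have stability := mul_norm_sub_le_of_mem_viSolutions (hmono p hp) (hsl p hp) (hsl p' hp')
    have hF := hlip.dist_le_mul (p', sl p') ⟨hp', (hsl p' hp').1⟩ (p, sl p') ⟨hp, (hsl p' hp').1⟩
    rw [Prod.dist_eq, dist_self, max_eq_left dist_nonneg, dist_comm p'] at hF
    rw [NNReal.coe_div, Real.coe_toNNReal _ hμ.le, div_mul_eq_mul_div, le_div_iff₀' hμ,
      dist_eq_norm]
    exact stability.trans (by rwa [← dist_eq_norm])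
  · refine eq_singleton_iff_unique_mem.2 ⟨hsl p hp, fun x hx => ?_⟩
    have stability := mul_norm_sub_le_of_mem_viSolutions (hmono p hp) hx (hsl p hp)
    rw [sub_self, norm_zero] at stability
    exact sub_eq_zero.1 (norm_le_zero_iff.1 (nonpos_of_mul_nonpos_right stability hμ))

theorem hasLipschitzLocalization_viSolutions [PseudoMetricSpace P] [CompleteSpace E]
    {N : Set (P × E)} (hA : IsClosed A) (hq : ConvexOn ℝ A q) (hlsc : LowerSemicontinuousOn q A)
    (hμ : 0 < μ) (hN : N ∈ 𝓝 (p₀, x₀))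
    (hmono : ∀ p, StronglyMonotoneOn μ (fun x => F (p, x)) (Prod.mk p ⁻¹' N))
    (hlip : LipschitzOnWith K F N) (hx₀ : x₀ ∈ viSolutions (fun x => F (p₀, x)) q A) :
    HasLipschitzLocalization (fun p => viSolutions (fun x => F (p, x)) q A) p₀ x₀ := by
  obtain ⟨r, hr, hrN⟩ := nhds_basis_closedBall.mem_iff.1 hN
  rw [← closedBall_prod_same] at hrN
  set C := A ∩ closedBall x₀ r
  have hCA : C ⊆ A := inter_subset_left
  have hqC : ConvexOn ℝ C q := hq.subset hCA (hq.1.inter (convex_closedBall x₀ r))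
  have hx₀C : x₀ ∈ C := ⟨hx₀.1, mem_closedBall_self hr.le⟩
  obtain ⟨sl, sl_lip, hsl⟩ := exists_lipschitzOnWith_viSolutions_eq_singleton
    (W := ball p₀ r) (hA.inter isClosed_closedBall) ⟨x₀, hx₀C⟩ hqC (hlsc.mono hCA) hμ
    (fun p hp x hx y hy => hmono p x (hrN ⟨ball_subset_closedBall hp, hx.2⟩) y
      (hrN ⟨ball_subset_closedBall hp, hy.2⟩))
    (hlip.mono fun z hz => hrN ⟨ball_subset_closedBall hz.1, hz.2.2⟩)
  have eq_sl {p x} (hp : p ∈ ball p₀ r) (hx : x ∈ viSolutions (fun x => F (p, x)) q A)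
      (hxC : x ∈ C) : x = sl p :=
    (hsl p hp).subset (mem_viSolutions_of_subset hCA hx hxC)
  have sl_p₀ : sl p₀ = x₀ := (eq_sl (mem_ball_self hr) hx₀ hx₀C).symm
  refine ⟨ball p₀ r ∩ sl ⁻¹' ball x₀ r, ball x₀ r, sl, _,
    sl_lip.continuousOn.isOpen_inter_preimage isOpen_ball isOpen_ball, isOpen_ball,
    ⟨mem_ball_self hr, by simp [sl_p₀, hr]⟩, mem_ball_self hr, sl_lip.mono inter_subset_left,
    sl_p₀, fun p hp => ?_⟩
  refine eq_singleton_iff_unique_mem.2 ⟨⟨?_, hp.2⟩, fun x hx =>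
    eq_sl hp.1 hx.1 ⟨hx.1.1, ball_subset_closedBall hx.2⟩⟩
  exact mem_viSolutions_of_inter_nhds hq (closedBall_mem_nhds_of_mem hp.2)
    ((hsl p hp.1).superset rfl)

variable [NormedAddCommGroup P] [NormedSpace ℝ P] {F' : P × E →L[ℝ] E} {ν : ℝ}

lemma stronglyMonotoneOn_of_approximatesLinearOn {N : Set (P × E)} {c : ℝ≥0}
    (hF : ApproximatesLinearOn F F' N c) (hF' : ∀ u, ν * ‖u‖ ^ 2 ≤ ⟪F' (0, u), u⟫) (p : P) :
    StronglyMonotoneOn (ν - c) (fun x => F (p, x)) (Prod.mk p ⁻¹' N) := by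
  intro x hx y hy
  have happrox : ‖F (p, x) - F (p, y) - F' (0, x - y)‖ ≤ c * ‖x - y‖ := by
    simpa [Prod.norm_def] using hF (p, x) hx (p, y) hy
  have hinner : -⟪F (p, x) - F (p, y) - F' (0, x - y), x - y⟫ ≤ c * ‖x - y‖ ^ 2 :=
    calc _ ≤ ‖F (p, x) - F (p, y) - F' (0, x - y)‖ * ‖x - y‖ :=
          (neg_le_abs _).trans (abs_real_inner_le_norm _ _)
      _ ≤ c * ‖x - y‖ * ‖x - y‖ := by gcongr
      _ = c * ‖x - y‖ ^ 2 := by ring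
  rw [inner_sub_left] at hinner
  linarith [hF' (x - y)]

theorem vi_solution_map_single_valued_lipschitz_localization_general [CompleteSpace E]
    (hF : HasStrictFDerivAt F F' (p₀, x₀)) (hν : 0 < ν)
    (hF' : ∀ u, ν * ‖u‖ ^ 2 ≤ ⟪F' (0, u), u⟫) (hA : IsClosed A) (hq : ConvexOn ℝ A q)
    (hlsc : LowerSemicontinuousOn q A) (hx₀ : x₀ ∈ viSolutions (fun x => F (p₀, x)) q A) :
    HasLipschitzLocalization (fun p => viSolutions (fun x => F (p, x)) q A) p₀ x₀ := by
  obtain ⟨c, hc, hcν⟩ : ∃ c : ℝ≥0, 0 < c ∧ c < ν :=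
    ⟨(ν / 2).toNNReal, by simpa using hν, by simp [hν]⟩
  obtain ⟨N, hN, happrox⟩ := hF.approximates_deriv_on_nhds (.inr hc)
  exact hasLipschitzLocalization_viSolutions hA hq hlsc (sub_pos.2 hcν) hN
    (stronglyMonotoneOn_of_approximatesLinearOn happrox hF')
    (lipschitzOnWith_iff_restrict.2 happrox.lipschitz) hx₀

end Parametric

lemma exists_pos_mul_norm_sq_le_inner {E : Type*} [NormedAddCommGroup E] [InnerProductSpace ℝ E]
    [FiniteDimensional ℝ E] (M : E →L[ℝ] E) (hM : ∀ u, u ≠ 0 → 0 < ⟪M u, u⟫) :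
    ∃ ν > 0, ∀ u, ν * ‖u‖ ^ 2 ≤ ⟪M u, u⟫ := by
  rcases subsingleton_or_nontrivial E with _ | _
  · exact ⟨1, one_pos, fun u => by simp [Subsingleton.elim u 0]⟩
  obtain ⟨v, hv, hmin⟩ := (isCompact_sphere (0 : E) 1).exists_isMinOn
    (NormedSpace.sphere_nonempty.2 zero_le_one) (f := fun u => ⟪M u, u⟫) (by fun_prop)
  refine ⟨⟪M v, v⟫, hM v (ne_zero_of_mem_unit_sphere ⟨v, hv⟩), fun u => ?_⟩
  rcases eq_or_ne u 0 with rfl | hu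
  · simp
  have min_le := hmin (show ‖u‖⁻¹ • u ∈ sphere (0 : E) 1 by simp [norm_smul, hu])
  simp only [mem_ofPred_eq, map_smul, real_inner_smul_left, inner_smul_right] at min_le
  rwa [← mul_assoc, ← sq, inv_pow, ← div_eq_inv_mul, le_div_iff₀ (by positivity)] at min_le

/-- Proposition 1 of the paper: if `F` is continuously differentiable, `q` is
convex and continuous, `A` is closed and convex and the partial Jacobian
`∇ₓF(p̄, x̄)` is positive definite, then the solution map `S` of the
parametrized variational inequality of the second kind has a single-valued and
Lipschitzian localization around `(p̄, x̄)`. -/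
theorem vi_solution_map_single_valued_lipschitz_localization
    (m s : ℕ)
    (F : EuclideanSpace ℝ (Fin m) × EuclideanSpace ℝ (Fin s) → EuclideanSpace ℝ (Fin s))
    (hF : ContDiff ℝ 1 F)
    (q : EuclideanSpace ℝ (Fin s) → ℝ)
    (hqconv : ConvexOn ℝ Set.univ q) (hqcont : Continuous q)
    (A : Set (EuclideanSpace ℝ (Fin s))) (hAcl : IsClosed A) (hAconv : Convex ℝ A)
    (S : EuclideanSpace ℝ (Fin m) → Set (EuclideanSpace ℝ (Fin s)))
    (hS : ∀ p, S p = {x | x ∈ A ∧ ∀ y ∈ A, 0 ≤ ⟪F (p, x), y - x⟫ + q y - q x})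
    (pb : EuclideanSpace ℝ (Fin m)) (xb : EuclideanSpace ℝ (Fin s))
    (hxb : xb ∈ S pb)
    (hpd : ∀ u : EuclideanSpace ℝ (Fin s), u ≠ 0 →
      0 < ⟪fderiv ℝ (fun x => F (pb, x)) xb u, u⟫) :
    ∃ (U : Set (EuclideanSpace ℝ (Fin m))) (V : Set (EuclideanSpace ℝ (Fin s)))
      (sl : EuclideanSpace ℝ (Fin m) → EuclideanSpace ℝ (Fin s)) (L : NNReal),
      IsOpen U ∧ IsOpen V ∧ pb ∈ U ∧ xb ∈ V ∧
      LipschitzOnWith L sl U ∧ sl pb = xb ∧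
      ∀ p ∈ U, S p ∩ V = {sl p} := by
  obtain rfl : S = fun p => viSolutions (fun x => F (p, x)) q A := funext hS
  have hstrict := hF.contDiffAt.hasStrictFDerivAt (x := (pb, xb)) one_ne_zero
  obtain ⟨ν, hν, hcoercive⟩ := exists_pos_mul_norm_sq_le_inner _ hpd
  have hpartial : fderiv ℝ (fun x => F (pb, x)) xb = (fderiv ℝ F (pb, xb)).comp (.inr ℝ _ _) :=
    (hstrict.hasFDerivAt.comp xb (hasFDerivAt_prodMk_right pb xb)).fderiv
  rw [hpartial] at hcoercive
  exact vi_solution_map_single_valued_lipschitz_localization_general hstrict hν hcoercive hAcl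
    (hqconv.subset (Set.subset_univ A) hAconv)
    (hqcont.lowerSemicontinuous.lowerSemicontinuousOn A) hxb
end
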